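/- Let n ≥ 2 and let G = (G₁, …, G_{n−1}) : ℂⁿ → ℂ^{n−1} be a polynomial mapping such that K₀(G) = ∅, i.e. at every z ∈ ℂⁿ the complex Jacobian matrix (∂G_j/∂z_i(z)) has rank n−1. Let a₁, …, a_n be nonnegative reals, not all zero, and set ρ(z) = a₁|z₁|² + ⋯ + a_n|z_n|². For i = 1, …, n let v_i(z) = (−1)^{1+i} · det of the (n−1) × (n−1) matrix obtained from the complex Jacobian matrix (∂G_j/∂z_k(z)) by deleting its i-th column, and define h : ℂⁿ → ℂ by h(z) = 2 Σ_{i=1}^{n} a_i v_i(z) · conj(z_i). Then the Milnor set M_G := { x ∈ ℂⁿ : the real Fréchet derivative at x of the map (G, ρ) : ℂⁿ → ℂ^{n−1} × ℝ has rank ≤ 2n−2 over ℝ } equals h⁻¹(0). -/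

import Mathlib

/-!
Write `D(G, ρ)(x) w = (J w, Re (b ⬝ w))`, where `J` is the complex Jacobian of `G` and
`b i = 2 * a i * conj (x i)`. Its target has real dimension `2 * m + 1`, so its rank is at most
`2 * m` iff it is not onto. Because the kernel of `J` is a complex subspace, it is onto iff the
complex-linear map `w ↦ (J w, b ⬝ w)` is, that is, iff the square matrix obtained by stacking `b`
on top of `J` is invertible; expanding its determinant along `b` gives `-h x`.
-/

open Function Matrix

section LinearAlgebra

theorem rank_le_iff_not_surjective {K V W : Type*} [DivisionRing K] [AddCommGroup V] [Module K V]
    [AddCommGroup W] [Module K W] {n : ℕ} (hW : Module.finrank K W = n + 1) (f : V →ₗ[K] W) :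
    LinearMap.rank f ≤ n ↔ ¬ Surjective f := by
  have : FiniteDimensional K W := Module.finite_of_finrank_eq_succ hW
  have hrank : LinearMap.rank f ≤ n ↔ Module.finrank K (LinearMap.range f) ≤ n := by
    rw [LinearMap.rank, ← Module.finrank_eq_rank, Nat.cast_le]
  rw [hrank, ← LinearMap.range_eq_top]
  refine ⟨fun hle htop => ?_, fun hne => ?_⟩
  · rw [htop, finrank_top] at hle
    lia
  · have := Submodule.finrank_lt hne
    lia

theorem surjective_prodMk_re_iff {𝕜 E F : Type*} [RCLike 𝕜] [AddCommGroup E] [Module 𝕜 E]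
    [AddCommGroup F] [Module 𝕜 F] (L : E →ₗ[𝕜] F) (f : E →ₗ[𝕜] 𝕜) :
    Surjective (fun w => (L w, RCLike.re (f w))) ↔ Surjective (fun w => (L w, f w)) := by
  refine ⟨fun hsurj => ?_, fun hsurj => ?_⟩
  · obtain ⟨k, hk⟩ := hsurj (0, 1)
    obtain ⟨hLk, hfk⟩ := Prod.mk.inj hk
    have hfk0 : f k ≠ 0 := fun h0 => by simp [h0] at hfk
    rintro ⟨y, c⟩
    obtain ⟨w, hw⟩ := hsurj (y, 0)
    have hLw : L w = y := congrArg Prod.fst hw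
    exact ⟨w + ((c - f w) / f k) • k, by simp [hLk, hLw, hfk0]⟩
  · rintro ⟨y, t⟩
    obtain ⟨w, hw⟩ := hsurj (y, (t : 𝕜))
    obtain ⟨hLw, hfw⟩ := Prod.mk.inj hw
    exact ⟨w, by simp [hLw, hfw]⟩

variable {R : Type*} [CommRing R] {m : ℕ}

/-- The vector of signed maximal minors of an `m × (m + 1)` matrix, a generalized cross product of
its rows. The sign `(-1) ^ (1 + i)` with `i` counted from `0` makes it minus the vector of cofactors
of a row added on top. -/
def signedMinors (J : Matrix (Fin m) (Fin (m + 1)) R) (i : Fin (m + 1)) : R :=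
  (-1) ^ (1 + (i : ℕ)) * (J.submatrix id i.succAbove).det

theorem dotProduct_signedMinors (J : Matrix (Fin m) (Fin (m + 1)) R) (b : Fin (m + 1) → R) :
    b ⬝ᵥ signedMinors J = -(of (vecCons b (of.symm J))).det := by
  rw [det_succ_row_zero, ← Finset.sum_neg_distrib]
  refine Finset.sum_congr rfl fun i _ => ?_
  have hminor : (of (vecCons b (of.symm J))).submatrix Fin.succ i.succAbove =
      J.submatrix id i.succAbove := rfl
  rw [hminor, signedMinors, of_apply, cons_val_zero, pow_add]
  ring

theorem surjective_mulVec_prodMk_dotProduct_iff (J : Matrix (Fin m) (Fin (m + 1)) R)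
    (b : Fin (m + 1) → R) :
    Surjective (fun w => (J *ᵥ w, b ⬝ᵥ w)) ↔ IsUnit (b ⬝ᵥ signedMinors J) := by
  let stack : (Fin m → R) × R ≃ (Fin (m + 1) → R) :=
    (Equiv.prodComm _ _).trans (Fin.consEquiv fun _ => R)
  have hstack : (of (vecCons b (of.symm J))).mulVec = stack ∘ fun w => (J *ᵥ w, b ⬝ᵥ w) :=
    funext fun w => cons_mulVec b (of.symm J) w
  rw [dotProduct_signedMinors, IsUnit.neg_iff, ← isUnit_iff_isUnit_det,
    ← mulVec_surjective_iff_isUnit, hstack, stack.comp_surjective]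

end LinearAlgebra

section Derivatives

theorem hasFDerivAt_eval_mvPolynomial {𝕜 σ : Type*} [NontriviallyNormedField 𝕜] [Fintype σ]
    (p : MvPolynomial σ 𝕜) (z : σ → 𝕜) :
    HasFDerivAt (fun z => MvPolynomial.eval z p)
      (∑ i, MvPolynomial.eval z (MvPolynomial.pderiv i p) •
        (ContinuousLinearMap.proj i : (σ → 𝕜) →L[𝕜] 𝕜)) z := by
  classical
  induction p using MvPolynomial.induction_on with
  | C c =>
    simp only [MvPolynomial.eval_C]
    exact (hasFDerivAt_const c z).congr_fderiv (by ext; simp)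
  | add p q hp hq =>
    simp only [map_add]
    exact (hp.fun_add hq).congr_fderiv (by ext; simp [add_mul, Finset.sum_add_distrib])
  | mul_X p i hp =>
    have hX : HasFDerivAt (fun z : σ → 𝕜 => z i) (ContinuousLinearMap.proj i) z :=
      hasFDerivAt_apply (𝕜 := 𝕜) i z
    simp only [map_mul, MvPolynomial.eval_X]
    refine (hp.fun_mul hX).congr_fderiv ?_
    have hcoeff (k : σ) :
        MvPolynomial.eval z (MvPolynomial.pderiv k (p * MvPolynomial.X i)) =
          (if k = i then MvPolynomial.eval z p else 0) +
            z i * MvPolynomial.eval z (MvPolynomial.pderiv k p) := by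
      rw [MvPolynomial.pderiv_mul, map_add, add_comm]
      obtain rfl | hki := eq_or_ne k i
      · simp [mul_comm]
      · simp [hki, MvPolynomial.pderiv_X_of_ne hki.symm, mul_comm]
    ext w
    simp [hcoeff, -Derivation.leibniz, add_mul, Finset.sum_add_distrib, Finset.mul_sum, mul_assoc]

theorem hasFDerivAt_eval_mvPolynomial_pi {𝕜 σ ι : Type*} [NontriviallyNormedField 𝕜]
    [CompleteSpace 𝕜] [Fintype σ] (G : ι → MvPolynomial σ 𝕜) (z : σ → 𝕜) :
    HasFDerivAt (fun z j => MvPolynomial.eval z (G j))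
      (of fun j i =>
        MvPolynomial.eval z (MvPolynomial.pderiv i (G j))).mulVecLin.toContinuousLinearMap z := by
  refine (hasFDerivAt_pi.2 fun j => hasFDerivAt_eval_mvPolynomial (G j) z).congr_fderiv ?_
  ext w j
  simp [mulVec, dotProduct]

theorem hasFDerivAt_sum_mul_norm_sq {ι : Type*} [Fintype ι] (a : ι → ℝ) (x : ι → ℂ) :
    HasFDerivAt (fun z : ι → ℂ => ∑ i, a i * ‖z i‖ ^ 2)
      (Complex.reCLM ∘L (∑ i, (2 * a i * starRingEnd ℂ (x i)) •
        (ContinuousLinearMap.proj i : (ι → ℂ) →L[ℂ] ℂ)).restrictScalars ℝ) x := by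
  have hterm (i : ι) : HasFDerivAt (fun z : ι → ℂ => a i * ‖z i‖ ^ 2)
      (Complex.reCLM ∘L ((2 * a i * starRingEnd ℂ (x i)) •
        (ContinuousLinearMap.proj i : (ι → ℂ) →L[ℂ] ℂ)).restrictScalars ℝ) x := by
    refine ((hasFDerivAt_apply (𝕜 := ℝ) i x).norm_sq.const_mul (a i)).congr_fderiv ?_
    ext w
    simp [Complex.inner]
    ring
  refine (HasFDerivAt.fun_sum fun i _ => hterm i).congr_fderiv ?_
  ext w
  simp

end Derivatives

section MilnorSet

variable {m : ℕ} {x : Fin (m + 1) → ℂ} {G : (Fin (m + 1) → ℂ) → Fin m → ℂ}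
  {J : Matrix (Fin m) (Fin (m + 1)) ℂ}

theorem rank_fderiv_prodMk_le_iff_dotProduct_signedMinors_eq_zero
    {ρ : (Fin (m + 1) → ℂ) → ℝ} {b : Fin (m + 1) → ℂ}
    (hG : HasFDerivAt G J.mulVecLin.toContinuousLinearMap x)
    (hρ : HasFDerivAt ρ (Complex.reCLM ∘L (∑ i, b i •
      (ContinuousLinearMap.proj i : (Fin (m + 1) → ℂ) →L[ℂ] ℂ)).restrictScalars ℝ) x) :
    LinearMap.rank (fderiv ℝ (fun z => (G z, ρ z)) x).toLinearMap ≤ (2 * m : ℕ) ↔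
      b ⬝ᵥ signedMinors J = 0 := by
  have hcod : Module.finrank ℝ ((Fin m → ℂ) × ℝ) = 2 * m + 1 := by
    simp [Module.finrank_pi_fintype, mul_comm]
  have hderiv : ⇑(fderiv ℝ (fun z => (G z, ρ z)) x) =
      fun w => (J.mulVecLin w, RCLike.re (dotProductBilin ℂ ℂ b w)) := by
    rw [((hG.restrictScalars ℝ).prodMk hρ).fderiv]
    funext w
    simp [dotProduct]
  rw [rank_le_iff_not_surjective hcod, ContinuousLinearMap.coe_coe, hderiv,
    surjective_prodMk_re_iff, not_iff_comm]
  exact isUnit_iff_ne_zero.symm.trans (surjective_mulVec_prodMk_dotProduct_iff J b).symm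

theorem stmt3_general (a : Fin (m + 1) → ℝ)
    (hG : HasFDerivAt G J.mulVecLin.toContinuousLinearMap x) :
    LinearMap.rank (fderiv ℝ (fun z => (G z, ∑ i, a i * ‖z i‖ ^ 2)) x).toLinearMap ≤ (2 * m : ℕ) ↔
      2 * ∑ i, (a i : ℂ) * signedMinors J i * starRingEnd ℂ (x i) = 0 := by
  have hdot : 2 * ∑ i, (a i : ℂ) * signedMinors J i * starRingEnd ℂ (x i) =
      (fun i => 2 * a i * starRingEnd ℂ (x i)) ⬝ᵥ signedMinors J := by
    rw [dotProduct, Finset.mul_sum]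
    exact Finset.sum_congr rfl fun i _ => by ring
  rw [hdot]
  exact rank_fderiv_prodMk_le_iff_dotProduct_signedMinors_eq_zero hG
    (hasFDerivAt_sum_mul_norm_sq a x)

end MilnorSet

/-- Let `n = m + 1 ≥ 2`, `G = (G₁, …, G_m) : ℂⁿ → ℂᵐ` a polynomial mapping whose
complex Jacobian matrix has rank `m = n - 1` at every point (`K₀(G) = ∅`), let `a_i ≥ 0` be
reals not all zero, `ρ(z) = ∑ a_i |z_i|²`, `v_i(z)` the signed cofactor determinants of the
Jacobian, and `h(z) = 2 ∑ a_i v_i(z) conj(z_i)`. Then the Milnor set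
`M_G = { x : rank_ℝ D(G, ρ)(x) ≤ 2n - 2 }` equals `h⁻¹(0)`. -/
theorem stmt3 (m : ℕ) (hm : 1 ≤ m)
    (G : Fin m → MvPolynomial (Fin (m + 1)) ℂ)
    (hreg : ∀ z : Fin (m + 1) → ℂ,
      Matrix.rank (Matrix.of fun (j : Fin m) (i : Fin (m + 1)) =>
        MvPolynomial.eval z (MvPolynomial.pderiv i (G j))) = m)
    (a : Fin (m + 1) → ℝ) (ha : ∀ i, 0 ≤ a i) (ha0 : ∑ i, (a i) ^ 2 ≠ 0)
    (ρ : (Fin (m + 1) → ℂ) → ℝ) (hρ : ρ = fun z => ∑ i, a i * ‖z i‖ ^ 2)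
    (v : (Fin (m + 1) → ℂ) → Fin (m + 1) → ℂ)
    (hv : ∀ (z : Fin (m + 1) → ℂ) (i : Fin (m + 1)),
      v z i = (-1 : ℂ) ^ (1 + (i : ℕ)) *
        ((Matrix.of fun (j : Fin m) (k : Fin (m + 1)) =>
          MvPolynomial.eval z (MvPolynomial.pderiv k (G j))).submatrix id i.succAbove).det)
    (h : (Fin (m + 1) → ℂ) → ℂ)
    (hh : h = fun z => 2 * ∑ i, (a i : ℂ) * v z i * starRingEnd ℂ (z i)) :
    {x : Fin (m + 1) → ℂ |
      LinearMap.rank (fderiv ℝ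
        (fun z => ((fun j => MvPolynomial.eval z (G j), ρ z) : (Fin m → ℂ) × ℝ)) x).toLinearMap
        ≤ ((2 * (m + 1) - 2 : ℕ) : Cardinal)} = h ⁻¹' {0} := by
  obtain rfl : v = fun z => signedMinors _ := funext fun z => funext (hv z)
  subst hρ hh
  exact Set.ext fun x => stmt3_general a (hasFDerivAt_eval_mvPolynomial_pi G x)
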